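/- arXiv:2312.08696 — 2 statements merged into one kernel-verified Lean document; each statement's English description precedes it below -/
import Mathlib

section
/- Let u : ℝ² → ℝ² be a continuously differentiable vector field with compact support, and let φ : ℝ² → ℝ² be the rotational field φ(x₁,x₂) = (−x₂, x₁). Then b_emac(u,u,φ) = 0; that is, ∫_{ℝ²} (2D(u)u)·φ + (∇·u)(u·φ) dx = 0. -/
open MeasureTheory RealInnerProductSpace

noncomputable section

abbrev E2 := EuclideanSpace ℝ (Fin 2)

/-- divergence of a vector field on ℝ² -/
def dvg (u : E2 → E2) (x : E2) : ℝ :=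
  ∑ i, fderiv ℝ u x (EuclideanSpace.single i 1) i

/-- convective trilinear form  b_conv(u,v,w) = ∫ ((u·∇)v)·w -/
def bConv (u v w : E2 → E2) : ℝ :=
  ∫ x, ⟪fderiv ℝ v x (u x), w x⟫

/-- EMAC trilinear form  b_emac(u,v,w) = ∫ (2D(u)v)·w + (∇·u)(v·w),
where (2D(u)v)·w = (∇u v)·w + (∇u w)·v. -/
def bEmac (u v w : E2 → E2) : ℝ :=
  ∫ x, (⟪fderiv ℝ u x (v x), w x⟫ + ⟪fderiv ℝ u x (w x), v x⟫
    + dvg u x * ⟪v x, w x⟫)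

/-- L² norm -/
def l2Norm {F : Type*} [NormedAddCommGroup F] (f : E2 → F) : ℝ :=
  (∫ x, ‖f x‖ ^ 2) ^ ((1 : ℝ) / 2)

/-- H¹ norm -/
def h1Norm (f : E2 → E2) : ℝ := l2Norm f + l2Norm (fderiv ℝ f)

/-- H² norm -/
def h2Norm (f : E2 → E2) : ℝ :=
  l2Norm f + l2Norm (fderiv ℝ f) + l2Norm (fderiv ℝ (fderiv ℝ f))

/-- rotational field φ(x₁,x₂) = (−x₂, x₁) -/
def phi : E2 → E2 := fun x => (WithLp.equiv 2 (Fin 2 → ℝ)).symm ![-x 1, x 0]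

/-!
With `F = (u·w) u + ½|u|² w` one has
`∇·F = (2D(u)u)·w + (∇·u)(u·w) + (∇w u)·u + ½|u|² ∇·w`.
When `w` generates isometries, such as the rotational field `φ`, its gradient is skew-symmetric and
hence traceless, so the last two terms vanish: the EMAC integrand is the divergence of a compactly
supported field.
-/

section Divergence

variable {E : Type*} [NormedAddCommGroup E] [NormedSpace ℝ E]

/-- The divergence of a vector field on a finite-dimensional space, as the trace of its Fréchet
derivative; this needs no choice of basis. -/
def divergence (F : E → E) (x : E) : ℝ :=
  LinearMap.trace ℝ E (fderiv ℝ F x)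

theorem divergence_add {F G : E → E} {x : E} (hF : DifferentiableAt ℝ F x)
    (hG : DifferentiableAt ℝ G x) :
    divergence (F + G) x = divergence F x + divergence G x := by
  simp [divergence, fderiv_add hF hG]

variable [FiniteDimensional ℝ E]

theorem divergence_smul {f : E → ℝ} {F : E → E} {x : E} (hf : DifferentiableAt ℝ f x)
    (hF : DifferentiableAt ℝ F x) :
    divergence (f • F) x = f x * divergence F x + fderiv ℝ f x (F x) := by
  simp [divergence, fderiv_smul hf hF, LinearMap.trace_smulRight]

variable [MeasurableSpace E] [BorelSpace E] (μ : Measure E) [μ.IsAddHaarMeasure]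

theorem integral_fderiv_eq_zero {G : Type*} [NormedAddCommGroup G] [NormedSpace ℝ G]
    {f : E → G} (hf : Differentiable ℝ f) (hf_int : Integrable f μ)
    (hf'_int : Integrable (fderiv ℝ f) μ) :
    ∫ x, fderiv ℝ f x ∂μ = 0 := by
  ext v
  rw [ContinuousLinearMap.integral_apply hf'_int]
  simpa using integral_smul_fderiv_eq_neg_fderiv_smul_of_integrable (𝕜 := ℝ) (μ := μ)
    (f := fun _ ↦ 1) (g := f) (v := v) (by simp)
    (by simpa using hf'_int.apply_continuousLinearMap v) (by simpa using hf_int)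
    (fun _ _ ↦ differentiableAt_const _) (fun x _ ↦ hf x)

theorem integral_divergence_eq_zero {F : E → E} (hF : Differentiable ℝ F)
    (hF_int : Integrable F μ) (hF'_int : Integrable (fderiv ℝ F) μ) :
    ∫ x, divergence F x ∂μ = 0 := by
  let trace : (E →L[ℝ] E) →L[ℝ] ℝ :=
    (LinearMap.trace ℝ E ∘ₗ ContinuousLinearMap.coeLM ℝ).toContinuousLinearMap
  calc ∫ x, divergence F x ∂μ = trace (∫ x, fderiv ℝ F x ∂μ) :=
        trace.integral_comp_comm hF'_int
    _ = 0 := by rw [integral_fderiv_eq_zero μ hF hF_int hF'_int, map_zero]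

theorem integral_divergence_eq_zero_of_hasCompactSupport {F : E → E} (hF : ContDiff ℝ 1 F)
    (hF_supp : HasCompactSupport F) :
    ∫ x, divergence F x ∂μ = 0 :=
  integral_divergence_eq_zero μ (hF.differentiable one_ne_zero)
    (hF.continuous.integrable_of_hasCompactSupport hF_supp)
    ((hF.continuous_fderiv one_ne_zero).integrable_of_hasCompactSupport (hF_supp.fderiv ℝ))

end Divergence

section Emac

variable {E : Type*} [NormedAddCommGroup E] [InnerProductSpace ℝ E]

theorem hasFDerivAt_norm_sq_div_two {G : Type*} [NormedAddCommGroup G] [NormedSpace ℝ G]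
    {f : G → E} {f' : G →L[ℝ] E} {x : G} (hf : HasFDerivAt f f' x) :
    HasFDerivAt (fun y ↦ ‖f y‖ ^ 2 / 2) (innerSL ℝ (f x) ∘L f') x := by
  simpa [div_eq_mul_inv, ← Nat.cast_smul_eq_nsmul ℝ, smul_smul] using hf.norm_sq.mul_const (2⁻¹ : ℝ)

/-- A `C¹` Killing field (infinitesimal isometry) of a Euclidean space: the symmetric gradient
`D(w)` vanishes, expressed through its quadratic form. -/
structure IsKillingField (w : E → E) : Prop where
  contDiff : ContDiff ℝ 1 w
  inner_fderiv_apply_self : ∀ x v, ⟪fderiv ℝ w x v, v⟫ = 0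

theorem IsKillingField.divergence_eq_zero [FiniteDimensional ℝ E] {w : E → E}
    (hw : IsKillingField w) (x : E) : divergence w x = 0 := by
  rw [divergence, LinearMap.trace_eq_sum_inner _ (stdOrthonormalBasis ℝ E)]
  refine Finset.sum_eq_zero fun i _ ↦ ?_
  rw [real_inner_comm]
  exact hw.inner_fderiv_apply_self x _

theorem isKillingField_of_inner_apply_self {A : E →L[ℝ] E} (hA : ∀ v, ⟪A v, v⟫ = 0) :
    IsKillingField A where
  contDiff := A.contDiff
  inner_fderiv_apply_self x v := by rw [A.fderiv, hA]

/-- The integrand `(2D(u)v)·w + (∇·u)(v·w)` of the EMAC form. -/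
def emacIntegrand (u v w : E → E) (x : E) : ℝ :=
  ⟪fderiv ℝ u x (v x), w x⟫ + ⟪fderiv ℝ u x (w x), v x⟫ + divergence u x * ⟪v x, w x⟫

/-- The vector field `(u·w) u + ½|u|² w`, whose divergence is the integrand of `b_emac(u,u,w)`
when `w` is a Killing field. -/
def emacFlux (u w : E → E) : E → E :=
  (fun x ↦ ⟪u x, w x⟫) • u + (fun x ↦ ‖u x‖ ^ 2 / 2) • w

theorem contDiff_emacFlux {n : WithTop ℕ∞} {u w : E → E} (hu : ContDiff ℝ n u)
    (hw : ContDiff ℝ n w) : ContDiff ℝ n (emacFlux u w) :=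
  ((hu.inner ℝ hw).smul hu).add (((hu.norm_sq ℝ).div_const 2).smul hw)

theorem hasCompactSupport_emacFlux {u : E → E} (hu : HasCompactSupport u) (w : E → E) :
    HasCompactSupport (emacFlux u w) :=
  hu.mono' <| Function.support_subset_iff'.2 fun x hx ↦ by
    simp [emacFlux, image_eq_zero_of_notMem_tsupport hx]

variable [FiniteDimensional ℝ E]

theorem divergence_emacFlux {u w : E → E} {x : E} (hu : DifferentiableAt ℝ u x)
    (hw : DifferentiableAt ℝ w x) :
    divergence (emacFlux u w) x = emacIntegrand u u w x + ⟪fderiv ℝ w x (u x), u x⟫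
      + ‖u x‖ ^ 2 / 2 * divergence w x := by
  have h_inner : DifferentiableAt ℝ (fun y ↦ ⟪u y, w y⟫) x := hu.inner ℝ hw
  have h_energy := hasFDerivAt_norm_sq_div_two hu.hasFDerivAt
  rw [emacFlux, divergence_add (h_inner.smul hu) (h_energy.differentiableAt.smul hw),
    divergence_smul h_inner hu, divergence_smul h_energy.differentiableAt hw,
    fderiv_inner_apply ℝ hu hw, h_energy.fderiv, ContinuousLinearMap.comp_apply,
    innerSL_apply_apply, real_inner_comm (fderiv ℝ w x (u x)),
    real_inner_comm (fderiv ℝ u x (w x)), emacIntegrand]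
  ring

theorem bEmac_rot_eq_zero_general [MeasurableSpace E] [BorelSpace E] (μ : Measure E)
    [μ.IsAddHaarMeasure] {u w : E → E} (hu : ContDiff ℝ 1 u) (hu_supp : HasCompactSupport u)
    (hw : IsKillingField w) :
    ∫ x, emacIntegrand u u w x ∂μ = 0 := by
  have h_div (x : E) : emacIntegrand u u w x = divergence (emacFlux u w) x := by
    rw [divergence_emacFlux (hu.differentiable one_ne_zero x)
      (hw.contDiff.differentiable one_ne_zero x), hw.inner_fderiv_apply_self,
      hw.divergence_eq_zero, mul_zero, add_zero, add_zero]
  simp_rw [h_div]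
  exact integral_divergence_eq_zero_of_hasCompactSupport μ (contDiff_emacFlux hu hw.contDiff)
    (hasCompactSupport_emacFlux hu_supp w)

end Emac

theorem dvg_eq_divergence (u : E2 → E2) (x : E2) : dvg u x = divergence u x := by
  rw [dvg, divergence, LinearMap.trace_eq_sum_inner _ (EuclideanSpace.basisFun (Fin 2) ℝ)]
  simp [EuclideanSpace.inner_single_left]

theorem bEmac_eq_integral_emacIntegrand (u v w : E2 → E2) :
    bEmac u v w = ∫ x, emacIntegrand u v w x := by
  simp_rw [bEmac, emacIntegrand, dvg_eq_divergence]

theorem isLinearMap_phi : IsLinearMap ℝ phi where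
  map_add x y := by ext i; fin_cases i <;> simp [phi, add_comm]
  map_smul c x := by ext i; fin_cases i <;> simp [phi]

theorem inner_phi_self (x : E2) : ⟪phi x, x⟫ = 0 := by
  simp [phi, PiLp.inner_apply, Fin.sum_univ_two, mul_comm]

theorem isKillingField_phi : IsKillingField phi :=
  isKillingField_of_inner_apply_self (A := isLinearMap_phi.mk' phi |>.toContinuousLinearMap)
    inner_phi_self

theorem bEmac_rot_eq_zero
    (u : E2 → E2) (hu : ContDiff ℝ 1 u) (hcu : HasCompactSupport u) :
    bEmac u u phi = 0 := by
  rw [bEmac_eq_integral_emacIntegrand]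
  exact bEmac_rot_eq_zero_general volume hu hcu isKillingField_phi
end
end

section
/- There exists a constant C > 0 such that for all continuously differentiable, compactly supported vector fields a, b : ℝ² → ℝ², |b_emac(a,b,b) + b_emac(b,a,b) − b_emac(a,a,b)| ≤ C ‖a − b‖_{H¹}² ‖b‖_{H¹}. -/
open MeasureTheory RealInnerProductSpace

noncomputable section

/-!
Write `e = a - b`. As `bEmac` is linear in its first two arguments, the Newton combination equals
`bEmac b b b - bEmac e e b`. The first term vanishes, since its integrand is the divergence of
`‖b‖² b`. Hölder's inequality with exponents `2, 4, 4` bounds the second by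
`4 ‖∇e‖_{L²} ‖e‖_{L⁴} ‖b‖_{L⁴}`, and the `L⁴` norms are controlled by Ladyzhenskaya's inequality,
which is the Gagliardo–Nirenberg–Sobolev inequality for `W^{1,1}` applied to `‖v‖²`.
-/

open scoped NNReal ENNReal

section NormSq

variable {E F : Type*} [NormedAddCommGroup E] [NormedSpace ℝ E] [NormedAddCommGroup F]
  [InnerProductSpace ℝ F]

lemma fderiv_norm_sq_comp_apply {v : E → F} {x : E} (hv : DifferentiableAt ℝ v x) (y : E) :
    fderiv ℝ (fun z => ‖v z‖ ^ 2) x y = 2 * ⟪v x, fderiv ℝ v x y⟫ := by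
  rw [hv.hasFDerivAt.norm_sq.fderiv]
  simp

lemma norm_fderiv_norm_sq_comp_le {v : E → F} {x : E} (hv : DifferentiableAt ℝ v x) :
    ‖fderiv ℝ (fun z => ‖v z‖ ^ 2) x‖ ≤ 2 * (‖v x‖ * ‖fderiv ℝ v x‖) := by
  refine ContinuousLinearMap.opNorm_le_bound _ (by positivity) fun y => ?_
  calc ‖fderiv ℝ (fun z => ‖v z‖ ^ 2) x y‖ = 2 * ‖⟪v x, fderiv ℝ v x y⟫‖ := by
        rw [fderiv_norm_sq_comp_apply hv, norm_mul, Real.norm_ofNat]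
    _ ≤ 2 * (‖v x‖ * (‖fderiv ℝ v x‖ * ‖y‖)) := by
        gcongr
        exact (norm_inner_le_norm _ _).trans (by gcongr; exact (fderiv ℝ v x).le_opNorm y)
    _ = 2 * (‖v x‖ * ‖fderiv ℝ v x‖) * ‖y‖ := by ring

end NormSq

section Holder

variable {α F G H K : Type*} {m : MeasurableSpace α} {μ : Measure α} [NormedAddCommGroup F]
  [NormedAddCommGroup G] [NormedAddCommGroup H] [NormedAddCommGroup K]

lemma eLpNorm_norm_mul_norm_le {f : α → F} {g : α → G} {p q r : ℝ≥0∞} [ENNReal.HolderTriple p q r]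
    (hf : AEStronglyMeasurable f μ) (hg : AEStronglyMeasurable g μ) :
    eLpNorm (fun x => ‖f x‖ * ‖g x‖) r μ ≤ eLpNorm f p μ * eLpNorm g q μ := by
  simpa only [eLpNorm_norm] using! eLpNorm_smul_le_mul_eLpNorm (p := p) (q := q) hg.norm hf.norm

lemma norm_integral_le_mul_lpNorm_of_norm_le [NormedSpace ℝ K] {f : α → F} {g : α → G} {h : α → H}
    {k : α → K} {p q r s : ℝ≥0∞} [ENNReal.HolderTriple q r s] [ENNReal.HolderTriple p s 1]
    {c : ℝ} (hc : 0 ≤ c) (hf : MemLp f p μ) (hg : MemLp g q μ) (hh : MemLp h r μ)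
    (hk : ∀ x, ‖k x‖ ≤ c * (‖f x‖ * (‖g x‖ * ‖h x‖))) :
    ‖∫ x, k x ∂μ‖ ≤ c * (lpNorm f p μ * (lpNorm g q μ * lpNorm h r μ)) := by
  have hgh : AEStronglyMeasurable (fun x => ‖g x‖ * ‖h x‖) μ := hg.1.norm.mul hh.1.norm
  have bound : ‖∫ x, k x ∂μ‖ₑ
      ≤ ENNReal.ofReal c * (eLpNorm f p μ * (eLpNorm g q μ * eLpNorm h r μ)) :=
    calc ‖∫ x, k x ∂μ‖ₑ ≤ eLpNorm k 1 μ := by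
          rw [eLpNorm_one_eq_lintegral_enorm]
          exact enorm_integral_le_lintegral_enorm k
      _ ≤ ENNReal.ofReal c * eLpNorm (fun x => ‖f x‖ * ‖‖g x‖ * ‖h x‖‖) 1 μ :=
          eLpNorm_le_mul_eLpNorm_of_ae_le_mul
            (.of_forall fun x => by simpa only [norm_mul, norm_norm] using hk x) 1
      _ ≤ ENNReal.ofReal c * (eLpNorm f p μ * (eLpNorm g q μ * eLpNorm h r μ)) := by
          gcongr
          refine (eLpNorm_norm_mul_norm_le (p := p) (q := s) hf.1 hgh).trans ?_
          gcongr
          exact eLpNorm_norm_mul_norm_le hg.1 hh.1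
  rwa [← ofReal_lpNorm hf, ← ofReal_lpNorm hg, ← ofReal_lpNorm hh,
    ← ENNReal.ofReal_mul lpNorm_nonneg, ← ENNReal.ofReal_mul lpNorm_nonneg,
    ← ENNReal.ofReal_mul hc, ← ofReal_norm, ENNReal.ofReal_le_ofReal_iff <| mul_nonneg hc <|
      mul_nonneg lpNorm_nonneg <| mul_nonneg lpNorm_nonneg lpNorm_nonneg] at bound

instance holderTriple_four_four_two : ENNReal.HolderTriple 4 4 2 where
  inv_add_inv_eq_inv := by
    rw [← two_mul, show (4 : ℝ≥0∞) = 2 * 2 by norm_num,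
      ENNReal.mul_inv (by simp) (by simp), ← mul_assoc, ENNReal.mul_inv_cancel (by simp) (by simp),
      one_mul]

end Holder

section FiniteDimensional

variable {E : Type*} [NormedAddCommGroup E] [NormedSpace ℝ E] [FiniteDimensional ℝ E]
  [MeasurableSpace E] [BorelSpace E] {μ : Measure E} [μ.IsAddHaarMeasure]

lemma integral_fderiv_apply_eq_zero {F : Type*} [NormedAddCommGroup F] [NormedSpace ℝ F]
    {f : E → F} {v : E} (hf : Differentiable ℝ f) (hfi : Integrable f μ)
    (hfv : Integrable (fun x => fderiv ℝ f x v) μ) : ∫ x, fderiv ℝ f x v ∂μ = 0 := by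
  simpa using integral_smul_fderiv_eq_neg_fderiv_smul_of_integrable (μ := μ)
    (f := fun _ => (1 : ℝ)) (g := f) (v := v) (by simp) (by simpa using hfv) (by simpa using hfi)
    (fun _ _ => differentiableAt_const _) (fun x _ => hf x)

lemma eLpNorm_mul_two_sq_le_eLpNorm_fderiv {F : Type*} [NormedAddCommGroup F]
    [InnerProductSpace ℝ F] {v : E → F} (hv : ContDiff ℝ 1 v) (hvc : HasCompactSupport v) {p : ℝ≥0}
    (hp : NNReal.HolderConjugate (Module.finrank ℝ E) p) :
    eLpNorm v (p * 2) μ ^ 2 ≤ eLpNormLESNormFDerivOneConst μ p *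
      (2 * (eLpNorm v 2 μ * eLpNorm (fderiv ℝ v) 2 μ)) := by
  have hsq : HasCompactSupport fun x => ‖v x‖ ^ 2 :=
    hvc.comp_left (g := fun y => ‖y‖ ^ 2) (by simp)
  calc eLpNorm v (p * 2) μ ^ 2 = eLpNorm (fun x => ‖v x‖ ^ 2) p μ := by
        simpa using (eLpNorm_norm_rpow (p := p) (μ := μ) v two_pos).symm
    _ ≤ eLpNormLESNormFDerivOneConst μ p * eLpNorm (fderiv ℝ fun x => ‖v x‖ ^ 2) 1 μ :=
        eLpNorm_le_eLpNorm_fderiv_one μ (hv.norm_sq ℝ) hsq hp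
    _ ≤ eLpNormLESNormFDerivOneConst μ p *
          (2 * eLpNorm (fun x => ‖v x‖ * ‖fderiv ℝ v x‖) 1 μ) := by
        gcongr
        rw [← ENNReal.ofReal_ofNat]
        refine eLpNorm_le_mul_eLpNorm_of_ae_le_mul (.of_forall fun x => ?_) 1
        simpa only [norm_mul, norm_norm] using
          norm_fderiv_norm_sq_comp_le (hv.differentiable one_ne_zero x)
    _ ≤ _ := by
        gcongr
        exact eLpNorm_norm_mul_norm_le hv.continuous.aestronglyMeasurable
          (hv.continuous_fderiv one_ne_zero).aestronglyMeasurable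

end FiniteDimensional

section SobolevNorms

lemma l2Norm_eq_lpNorm {F : Type*} [NormedAddCommGroup F] {f : E2 → F}
    (hf : AEStronglyMeasurable f volume) : l2Norm f = lpNorm f 2 volume := by
  simp [l2Norm, lpNorm_eq_integral_norm_rpow_toReal two_ne_zero ENNReal.ofNat_ne_top hf]

lemma l2Norm_nonneg {F : Type*} [NormedAddCommGroup F] (f : E2 → F) : 0 ≤ l2Norm f :=
  Real.rpow_nonneg (integral_nonneg fun _ => by positivity) _

lemma h1Norm_nonneg (f : E2 → E2) : 0 ≤ h1Norm f :=
  add_nonneg (l2Norm_nonneg _) (l2Norm_nonneg _)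

lemma l2Norm_fderiv_le_h1Norm (f : E2 → E2) : l2Norm (fderiv ℝ f) ≤ h1Norm f :=
  le_add_of_nonneg_left (l2Norm_nonneg f)

lemma l2Norm_mul_l2Norm_fderiv_le_h1Norm_sq (f : E2 → E2) :
    l2Norm f * l2Norm (fderiv ℝ f) ≤ h1Norm f ^ 2 := by
  rw [sq]
  exact mul_le_mul (le_add_of_nonneg_right (l2Norm_nonneg _)) (l2Norm_fderiv_le_h1Norm f)
    (l2Norm_nonneg _) (h1Norm_nonneg f)

lemma lpNorm_four_sq_le_l2Norm_fderiv {F : Type*} [NormedAddCommGroup F] [InnerProductSpace ℝ F]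
    {v : E2 → F} (hv : ContDiff ℝ 1 v) (hvc : HasCompactSupport v) :
    lpNorm v 4 volume ^ 2 ≤ eLpNormLESNormFDerivOneConst (volume : Measure E2) 2 *
      (2 * (l2Norm v * l2Norm (fderiv ℝ v))) := by
  have hdim : NNReal.HolderConjugate (Module.finrank ℝ E2) 2 := by
    simpa using NNReal.HolderConjugate.two_two
  have hdv := hv.continuous_fderiv one_ne_zero
  have bound := eLpNorm_mul_two_sq_le_eLpNorm_fderiv (μ := volume) hv hvc hdim
  have hfin : eLpNorm v 2 volume * eLpNorm (fderiv ℝ v) 2 volume ≠ ∞ :=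
    ENNReal.mul_ne_top (hv.continuous.memLp_of_hasCompactSupport hvc).eLpNorm_ne_top
      (hdv.memLp_of_hasCompactSupport (hvc.fderiv ℝ)).eLpNorm_ne_top
  have bound_toReal := ENNReal.toReal_mono (by finiteness) bound
  rw [show ((2 : ℝ≥0) : ℝ≥0∞) * 2 = 4 by norm_num] at bound_toReal
  simpa [ENNReal.toReal_mul, toReal_eLpNorm, l2Norm_eq_lpNorm,
    hv.continuous.aestronglyMeasurable, hdv.aestronglyMeasurable] using bound_toReal

lemma exists_lpNorm_four_le_h1Norm : ∃ C : ℝ, 0 < C ∧ ∀ v : E2 → E2,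
    ContDiff ℝ 1 v → HasCompactSupport v → lpNorm v 4 volume ≤ C * h1Norm v := by
  set K : ℝ≥0 := eLpNormLESNormFDerivOneConst (volume : Measure E2) 2
  refine ⟨√(2 * K + 1), by positivity, fun v hv hvc => ?_⟩
  have := h1Norm_nonneg v
  refine le_of_sq_le_sq ?_ (by positivity)
  calc lpNorm v 4 volume ^ 2 ≤ K * (2 * (l2Norm v * l2Norm (fderiv ℝ v))) :=
        lpNorm_four_sq_le_l2Norm_fderiv hv hvc
    _ ≤ K * (2 * h1Norm v ^ 2) := by
        gcongr
        exact l2Norm_mul_l2Norm_fderiv_le_h1Norm_sq v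
    _ ≤ (2 * K + 1) * h1Norm v ^ 2 := by linarith [sq_nonneg (h1Norm v)]
    _ = (√(2 * K + 1) * h1Norm v) ^ 2 := by rw [mul_pow, Real.sq_sqrt (by positivity)]

end SobolevNorms

section Divergence

variable {u : E2 → E2}

lemma continuous_dvg (hu : ContDiff ℝ 1 u) : Continuous (dvg u) := by
  have := hu.continuous_fderiv one_ne_zero
  unfold dvg
  fun_prop

lemma norm_dvg_le (u : E2 → E2) (x : E2) : ‖dvg u x‖ ≤ 2 * ‖fderiv ℝ u x‖ := by
  have hdiag (i : Fin 2) : ‖fderiv ℝ u x (EuclideanSpace.single i 1) i‖ ≤ ‖fderiv ℝ u x‖ :=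
    (PiLp.norm_apply_le _ i).trans ((fderiv ℝ u x).unit_le_opNorm _ (by simp))
  simpa [dvg] using norm_sum_le_of_le Finset.univ fun i _ => hdiag i

lemma dvg_sub {v : E2 → E2} {x : E2} (hu : DifferentiableAt ℝ u x) (hv : DifferentiableAt ℝ v x) :
    dvg (u - v) x = dvg u x - dvg v x := by
  simp [dvg, fderiv_sub hu hv, Finset.sum_sub_distrib]

lemma dvg_smul {f : E2 → ℝ} {x : E2} (hf : DifferentiableAt ℝ f x) (hu : DifferentiableAt ℝ u x) :
    dvg (fun y => f y • u y) x = fderiv ℝ f x (u x) + f x * dvg u x := by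
  have hux : fderiv ℝ f x (u x) = ∑ i, u x i * fderiv ℝ f x (EuclideanSpace.single i 1) := by
    conv_lhs => rw [← (EuclideanSpace.basisFun (Fin 2) ℝ).sum_repr (u x)]
    simp
  rw [hux, dvg, dvg, Finset.mul_sum, ← Finset.sum_add_distrib]
  refine Finset.sum_congr rfl fun i _ => ?_
  simp only [fderiv_fun_smul hf hu, add_apply, smul_apply, ContinuousLinearMap.smulRight_apply,
    PiLp.add_apply, PiLp.smul_apply, smul_eq_mul]
  ring

lemma integral_dvg_eq_zero (hu : ContDiff ℝ 1 u) (huc : HasCompactSupport u) :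
    ∫ x, dvg u x = 0 := by
  have hint (i : Fin 2) : Integrable fun x => fderiv ℝ u x (EuclideanSpace.single i 1) :=
    ((hu.continuous_fderiv one_ne_zero).clm_apply continuous_const).integrable_of_hasCompactSupport
      (huc.fderiv_apply ℝ _)
  have hzero (i : Fin 2) : ∫ x, fderiv ℝ u x (EuclideanSpace.single i 1) = 0 :=
    integral_fderiv_apply_eq_zero (hu.differentiable one_ne_zero)
      (hu.continuous.integrable_of_hasCompactSupport huc) (hint i)
  have hcoord (i : Fin 2) : ∫ x, fderiv ℝ u x (EuclideanSpace.single i 1) i = 0 := by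
    simpa [hzero] using (EuclideanSpace.proj (𝕜 := ℝ) i).integral_comp_comm (hint i)
  calc ∫ x, dvg u x = ∑ i, ∫ x, fderiv ℝ u x (EuclideanSpace.single i 1) i :=
        integral_finsetSum _ fun i _ => (EuclideanSpace.proj (𝕜 := ℝ) i).integrable_comp (hint i)
    _ = 0 := Finset.sum_eq_zero fun i _ => hcoord i

end Divergence

section Emac

variable {u u' v v' w : E2 → E2}

/-- The integrand `(2 D(u) v) · w + (∇·u) (v · w)` of the EMAC form `bEmac`. -/
def emacDensity (u v w : E2 → E2) (x : E2) : ℝ :=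
  ⟪fderiv ℝ u x (v x), w x⟫ + ⟪fderiv ℝ u x (w x), v x⟫ + dvg u x * ⟪v x, w x⟫

lemma bEmac_eq_integral_emacDensity (u v w : E2 → E2) :
    bEmac u v w = ∫ x, emacDensity u v w x := rfl

lemma continuous_emacDensity (hu : ContDiff ℝ 1 u) (hv : Continuous v) (hw : Continuous w) :
    Continuous (emacDensity u v w) := by
  have := hu.continuous_fderiv one_ne_zero
  have := continuous_dvg hu
  unfold emacDensity
  fun_prop

lemma integrable_emacDensity (hu : ContDiff ℝ 1 u) (hv : Continuous v) (hw : Continuous w)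
    (hwc : HasCompactSupport w) : Integrable (emacDensity u v w) :=
  (continuous_emacDensity hu hv hw).integrable_of_hasCompactSupport <|
    hwc.mono fun x hx hwx => hx (by simp [emacDensity, hwx])

lemma norm_emacDensity_le (u v w : E2 → E2) (x : E2) :
    ‖emacDensity u v w x‖ ≤ 4 * (‖fderiv ℝ u x‖ * (‖v x‖ * ‖w x‖)) := by
  have inner_le (y z : E2) : ‖⟪fderiv ℝ u x y, z⟫‖ ≤ ‖fderiv ℝ u x‖ * ‖y‖ * ‖z‖ :=
    (norm_inner_le_norm _ _).trans (by gcongr; exact (fderiv ℝ u x).le_opNorm y)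
  have dvg_mul_le : ‖dvg u x * ⟪v x, w x⟫‖ ≤ 2 * ‖fderiv ℝ u x‖ * (‖v x‖ * ‖w x‖) := by
    rw [norm_mul]
    gcongr
    exacts [norm_dvg_le u x, norm_inner_le_norm _ _]
  calc ‖emacDensity u v w x‖ ≤ _ := norm_add₃_le
    _ ≤ ‖fderiv ℝ u x‖ * ‖v x‖ * ‖w x‖ + ‖fderiv ℝ u x‖ * ‖w x‖ * ‖v x‖
          + 2 * ‖fderiv ℝ u x‖ * (‖v x‖ * ‖w x‖) := by
        gcongr
        exacts [inner_le _ _, inner_le _ _]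
    _ = 4 * (‖fderiv ℝ u x‖ * (‖v x‖ * ‖w x‖)) := by ring

lemma bEmac_sub_left (hu : ContDiff ℝ 1 u) (hu' : ContDiff ℝ 1 u') (hv : Continuous v)
    (hw : Continuous w) (hwc : HasCompactSupport w) :
    bEmac (u - u') v w = bEmac u v w - bEmac u' v w := by
  simp only [bEmac_eq_integral_emacDensity]
  rw [← integral_sub (integrable_emacDensity hu hv hw hwc) (integrable_emacDensity hu' hv hw hwc)]
  congr with x
  have hux := hu.differentiable one_ne_zero x
  have hux' := hu'.differentiable one_ne_zero x
  simp only [emacDensity, fderiv_sub hux hux', dvg_sub hux hux', sub_apply, inner_sub_left]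
  ring

lemma bEmac_sub_middle (hu : ContDiff ℝ 1 u) (hv : Continuous v) (hv' : Continuous v')
    (hw : Continuous w) (hwc : HasCompactSupport w) :
    bEmac u (v - v') w = bEmac u v w - bEmac u v' w := by
  simp only [bEmac_eq_integral_emacDensity]
  rw [← integral_sub (integrable_emacDensity hu hv hw hwc) (integrable_emacDensity hu hv' hw hwc)]
  congr with x
  simp only [emacDensity, Pi.sub_apply, map_sub, inner_sub_left, inner_sub_right]
  ring

lemma emacDensity_self {x : E2} (hu : DifferentiableAt ℝ u x) :
    emacDensity u u u x = dvg (fun y => ‖u y‖ ^ 2 • u y) x := by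
  rw [dvg_smul (hu.norm_sq ℝ) hu, fderiv_norm_sq_comp_apply hu, emacDensity,
    real_inner_self_eq_norm_sq, real_inner_comm]
  ring

lemma bEmac_self_eq_zero (hu : ContDiff ℝ 1 u) (huc : HasCompactSupport u) : bEmac u u u = 0 := by
  simp only [bEmac_eq_integral_emacDensity, emacDensity_self (hu.differentiable one_ne_zero _)]
  exact integral_dvg_eq_zero ((hu.norm_sq ℝ).smul hu) (huc.smul_left (f := fun x => ‖u x‖ ^ 2))

lemma bEmac_newton_eq_neg_bEmac_sub_sub {a b : E2 → E2} (ha : ContDiff ℝ 1 a) (hb : ContDiff ℝ 1 b)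
    (hbc : HasCompactSupport b) :
    bEmac a b b + bEmac b a b - bEmac a a b = -bEmac (a - b) (a - b) b := by
  have ha' := ha.continuous
  have hb' := hb.continuous
  rw [bEmac_sub_left ha hb (ha'.sub hb') hb' hbc, bEmac_sub_middle ha ha' hb' hb' hbc,
    bEmac_sub_middle hb ha' hb' hb' hbc, bEmac_self_eq_zero hb hbc]
  ring

lemma abs_bEmac_le_mul_lpNorm (hu : MemLp (fderiv ℝ u) 2) (hv : MemLp v 4) (hw : MemLp w 4) :
    |bEmac u v w| ≤
      4 * (lpNorm (fderiv ℝ u) 2 volume * (lpNorm v 4 volume * lpNorm w 4 volume)) :=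
  norm_integral_le_mul_lpNorm_of_norm_le (s := 2) (by norm_num) hu hv hw (norm_emacDensity_le u v w)

lemma exists_abs_bEmac_le_mul_h1Norm : ∃ C : ℝ, 0 < C ∧ ∀ u v w : E2 → E2,
    ContDiff ℝ 1 u → ContDiff ℝ 1 v → ContDiff ℝ 1 w →
    HasCompactSupport u → HasCompactSupport v → HasCompactSupport w →
    |bEmac u v w| ≤ C * (h1Norm u * h1Norm v * h1Norm w) := by
  obtain ⟨C, hC, lpNorm_four_le⟩ := exists_lpNorm_four_le_h1Norm
  refine ⟨4 * C ^ 2, by positivity, fun u v w hu hv hw huc hvc hwc => ?_⟩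
  have hdu := hu.continuous_fderiv one_ne_zero
  calc |bEmac u v w|
      ≤ 4 * (lpNorm (fderiv ℝ u) 2 volume * (lpNorm v 4 volume * lpNorm w 4 volume)) :=
        abs_bEmac_le_mul_lpNorm (hdu.memLp_of_hasCompactSupport (huc.fderiv ℝ))
          (hv.continuous.memLp_of_hasCompactSupport hvc)
          (hw.continuous.memLp_of_hasCompactSupport hwc)
    _ ≤ 4 * (h1Norm u * ((C * h1Norm v) * (C * h1Norm w))) := by
        have := h1Norm_nonneg u
        have := h1Norm_nonneg v
        have : 0 ≤ lpNorm v 4 volume := lpNorm_nonneg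
        have : 0 ≤ lpNorm w 4 volume := lpNorm_nonneg
        rw [← l2Norm_eq_lpNorm hdu.aestronglyMeasurable]
        gcongr
        exacts [l2Norm_fderiv_le_h1Norm u, lpNorm_four_le v hv hvc, lpNorm_four_le w hw hwc]
    _ = 4 * C ^ 2 * (h1Norm u * h1Norm v * h1Norm w) := by ring

end Emac

theorem newton_emac_energy_bound
    : ∃ C : ℝ, 0 < C ∧ ∀ a b : E2 → E2,
      ContDiff ℝ 1 a → ContDiff ℝ 1 b →
      HasCompactSupport a → HasCompactSupport b →
      |bEmac a b b + bEmac b a b - bEmac a a b|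
        ≤ C * h1Norm (fun x => a x - b x) ^ 2 * h1Norm b := by
  obtain ⟨C, hC, abs_bEmac_le⟩ := exists_abs_bEmac_le_mul_h1Norm
  refine ⟨C, hC, fun a b ha hb hac hbc => ?_⟩
  have hab := ha.sub hb
  have habc := hac.sub hbc
  calc |bEmac a b b + bEmac b a b - bEmac a a b| = |bEmac (a - b) (a - b) b| := by
        rw [bEmac_newton_eq_neg_bEmac_sub_sub ha hb hbc, abs_neg]
    _ ≤ C * (h1Norm (a - b) * h1Norm (a - b) * h1Norm b) :=
        abs_bEmac_le _ _ _ hab hab hb habc habc hbc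
    _ = C * h1Norm (fun x => a x - b x) ^ 2 * h1Norm b := by
        rw [← sq, ← mul_assoc]
        rfl
end
end
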